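/- (Escape point of α.) Let p* := (−1 + √(2√3) − √3)/2 (so p* ≈ −0.435). Then α(p*) = −1, where α(p) := p³(2+p)/(1+2p); moreover, for every real p with p* < p < 1 one has −1 < α(p) < 1, and for every real p with −1/2 < p < p* one has α(p) < −1. -/

import Mathlib

noncomputable def α (p : ℝ) : ℝ := p ^ 3 * (2 + p) / (1 + 2 * p)

noncomputable def pStar : ℝ := (-1 + Real.sqrt (2 * Real.sqrt 3) - Real.sqrt 3) / 2

/-!
The derivative `6 p² (1 + p)² / (1 + 2 p)²` of `α` is positive on `(-1/2, ∞)` except at `0`, so `α`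
is strictly increasing there, and only the values `α p* = -1` and `α 1 = 1` have to be computed.
For the first, `α p = -1` amounts to the quartic `p³ (2 + p) + (1 + 2 p)`, which splits over `ℚ(√3)`
into two quadratics, and `p*` is the larger root of `p² + (1 + √3) p + 1`.
-/

open Set

theorem strictMonoOn_of_deriv_pos_of_ne {D : Set ℝ} (hD : Convex ℝ D) {f : ℝ → ℝ} {c : ℝ}
    (hf : ContinuousOn f D) (hf' : ∀ x ∈ interior D, x ≠ c → 0 < deriv f x) :
    StrictMonoOn f D := by
  have lt_of_notMem : ∀ u ∈ D, ∀ v ∈ D, u < v → c ∉ Ioo u v → f u < f v := by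
    intro u hu v hv huv hc
    have hsub : Icc u v ⊆ D := hD.ordConnected.out hu hv
    have hmono : StrictMonoOn f (Icc u v) :=
      strictMonoOn_of_deriv_pos (convex_Icc u v) (hf.mono hsub) fun x hx ↦
        hf' x (interior_mono hsub hx) fun hxc ↦ hc (by rwa [interior_Icc, hxc] at hx)
    exact hmono (left_mem_Icc.2 huv.le) (right_mem_Icc.2 huv.le) huv
  intro x hx y hy hxy
  by_cases hc : c ∈ Ioo x y
  · have hcD : c ∈ D := hD.ordConnected.out hx hy (Ioo_subset_Icc_self hc)
    exact (lt_of_notMem x hx c hcD hc.1 right_notMem_Ioo).trans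
      (lt_of_notMem c hcD y hy hc.2 left_notMem_Ioo)
  · exact lt_of_notMem x hx y hy hxy hc

theorem hasDerivAt_alpha {p : ℝ} (hp : 1 + 2 * p ≠ 0) :
    HasDerivAt α (6 * p ^ 2 * (1 + p) ^ 2 / (1 + 2 * p) ^ 2) p := by
  have hnum : HasDerivAt (fun x : ℝ ↦ x ^ 3 * (2 + x)) (3 * p ^ 2 * (2 + p) + p ^ 3) p := by
    simpa using (hasDerivAt_pow 3 p).fun_mul ((hasDerivAt_id p).const_add 2)
  have hden : HasDerivAt (fun x : ℝ ↦ 1 + 2 * x) 2 p := by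
    simpa using ((hasDerivAt_id p).const_mul 2).const_add 1
  refine (hnum.div hden hp).congr_deriv ?_
  congr 1
  ring

theorem strictMonoOn_alpha : StrictMonoOn α (Ioi (-(1 / 2))) := by
  have one_add_two_mul_pos : ∀ p ∈ Ioi (-(1 / 2) : ℝ), 0 < 1 + 2 * p := by
    intro p hp
    linarith [mem_Ioi.1 hp]
  refine strictMonoOn_of_deriv_pos_of_ne (c := 0) (convex_Ioi _) (fun p hp ↦ ?_) fun p hp hp0 ↦ ?_
  · exact (hasDerivAt_alpha (one_add_two_mul_pos p hp).ne').continuousAt.continuousWithinAt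
  · rw [interior_Ioi] at hp
    have hden := one_add_two_mul_pos p hp
    have hp1 : 0 < 1 + p := by linarith [mem_Ioi.1 hp]
    rw [(hasDerivAt_alpha hden.ne').deriv]
    positivity

theorem alpha_one : α 1 = 1 := by
  norm_num [α]

theorem neg_half_lt_pStar : -(1 / 2) < pStar := by
  have lt_sqrt_three : 3 / 2 < √3 := (Real.lt_sqrt (by norm_num)).2 (by norm_num)
  have sqrt_lt_sqrt_two_mul : √3 < √(2 * √3) := Real.sqrt_lt_sqrt (by norm_num) (by linarith)
  unfold pStar
  linarith

theorem pStar_quadratic : pStar ^ 2 + (1 + √3) * pStar + 1 = 0 := by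
  have sq_sqrt_three : √3 ^ 2 = 3 := Real.sq_sqrt (by norm_num)
  have sq_sqrt_two_mul : √(2 * √3) ^ 2 = 2 * √3 := Real.sq_sqrt (by positivity)
  unfold pStar
  linear_combination (1 / 4) * sq_sqrt_two_mul - (1 / 4) * sq_sqrt_three

theorem quartic_eq_mul_of_sq_eq_three {R : Type*} [CommRing R] {s : R} (hs : s ^ 2 = 3) (x : R) :
    x ^ 3 * (2 + x) + (1 + 2 * x) =
      (x ^ 2 + (1 + s) * x + 1) * (x ^ 2 + (1 - s) * x + 1) := by
  linear_combination x ^ 2 * hs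

theorem alpha_pStar : α pStar = -1 := by
  have hden : 1 + 2 * pStar ≠ 0 := by linarith [neg_half_lt_pStar]
  have quartic_eq_zero : pStar ^ 3 * (2 + pStar) + (1 + 2 * pStar) = 0 := by
    rw [quartic_eq_mul_of_sq_eq_three (Real.sq_sqrt (by norm_num : (0 : ℝ) ≤ 3)), pStar_quadratic,
      zero_mul]
  rw [α, div_eq_iff hden, neg_one_mul]
  exact eq_neg_of_add_eq_zero_left quartic_eq_zero

/-- Escape point of α. -/
theorem alpha_escape_point :
    α pStar = -1 ∧
    (∀ p : ℝ, pStar < p → p < 1 → -1 < α p ∧ α p < 1) ∧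
    (∀ p : ℝ, -(1/2) < p → p < pStar → α p < -1) := by
  refine ⟨alpha_pStar, fun p hp hp1 ↦ ⟨?_, ?_⟩, fun p hp hpStar ↦ ?_⟩
  · rw [← alpha_pStar]
    exact strictMonoOn_alpha neg_half_lt_pStar (neg_half_lt_pStar.trans hp) hp
  · rw [← alpha_one]
    have hp_half : -(1 / 2) < p := neg_half_lt_pStar.trans hp
    exact strictMonoOn_alpha hp_half (hp_half.trans hp1) hp1
  · rw [← alpha_pStar]
    exact strictMonoOn_alpha hp neg_half_lt_pStar hpStar
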